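/- Soundness of the Hilbert calculus H with respect to the 4-valued Nmatrix semantics for the minimal modal logic M: for every set of formulas Γ and every formula A, if Γ ⊢_H A then every valuation v ∈ F that designates all formulas of Γ also designates A. -/

import Mathlib

/-- Formulas of the modal language: propositional variables, negation,
the modality ⊖ (here `box`), and implication. -/
inductive Form : Type
  | var : ℕ → Form
  | neg : Form → Form
  | box : Form → Form
  | imp : Form → Form → Form

/-- A valuation `v = (v1, v2)` over the 4-valued Nmatrix for the minimal modal
logic M: `v1` behaves classically on ¬ and →, and `v1(⊖A) = v2(A)`;
`v2` is otherwise unconstrained. -/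
structure Val where
  v1 : Form → Fin 2
  v2 : Form → Fin 2
  neg_eq : ∀ A, v1 (Form.neg A) = 1 - v1 A
  imp_eq : ∀ A B, v1 (Form.imp A B) = max (1 - v1 A) (v1 B)
  box_eq : ∀ A, v1 (Form.box A) = v2 A

/-- The Hilbert calculus H for the minimal modal logic M. -/
inductive HM : Set Form → Form → Prop
  | hyp {Γ A} : A ∈ Γ → HM Γ A
  | ax1 {Γ} (A B : Form) : HM Γ (A.imp (B.imp A))
  | ax2 {Γ} (A B C : Form) :
      HM Γ ((A.imp (B.imp C)).imp ((A.imp B).imp (A.imp C)))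
  | ax3 {Γ} (A B : Form) : HM Γ ((B.neg.imp A.neg).imp (A.imp B))
  | mp {Γ A B} : HM Γ (A.imp B) → HM Γ A → HM Γ B

namespace Val

/-- `v.Designates A` says that `A` is designated under `v`: among the four truth values
`(v1 A, v2 A)`, the designated ones are those whose first component is `1`. -/
def Designates (v : Val) (A : Form) : Prop :=
  v.v1 A = 1

variable (v : Val) (A B C : Form)

theorem designates_neg_iff : v.Designates A.neg ↔ ¬ v.Designates A := by
  have one_sub_eq_one_iff : ∀ a : Fin 2, 1 - a = 1 ↔ ¬ a = 1 := by decide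
  rw [Designates, v.neg_eq]
  exact one_sub_eq_one_iff (v.v1 A)

theorem designates_imp_iff : v.Designates (A.imp B) ↔ (v.Designates A → v.Designates B) := by
  have max_one_sub_eq_one_iff : ∀ a b : Fin 2, max (1 - a) b = 1 ↔ (a = 1 → b = 1) := by decide
  rw [Designates, v.imp_eq]
  exact max_one_sub_eq_one_iff (v.v1 A) (v.v1 B)

theorem designates_ax1 : v.Designates (A.imp (B.imp A)) := by
  simp only [designates_imp_iff]
  exact fun hA _ => hA

theorem designates_ax2 :
    v.Designates ((A.imp (B.imp C)).imp ((A.imp B).imp (A.imp C))) := by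
  simp only [designates_imp_iff]
  exact fun hABC hAB hA => hABC hA (hAB hA)

theorem designates_ax3 : v.Designates ((B.neg.imp A.neg).imp (A.imp B)) := by
  simp only [designates_imp_iff, designates_neg_iff]
  exact fun hBA hA => by_contra fun hB => hBA hB hA

end Val

/-- Soundness of H w.r.t. the 4-valued Nmatrix semantics for M. -/
theorem soundness_M (Γ : Set Form) (A : Form) (h : HM Γ A) :
    ∀ v : Val, (∀ B ∈ Γ, v.v1 B = 1) → v.v1 A = 1 := by
  intro v hΓ
  change v.Designates A
  induction h with
  | hyp hA => exact hΓ _ hA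
  | ax1 A B => exact v.designates_ax1 A B
  | ax2 A B C => exact v.designates_ax2 A B C
  | ax3 A B => exact v.designates_ax3 A B
  | mp _ _ hAB hA => exact (v.designates_imp_iff _ _).mp hAB hA
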